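/- arXiv:2010.00729 — 6 statements merged into one kernel-verified Lean document; each statement's English description precedes it below -/
import Mathlib

section
/- Let n, K ≥ 1, let V be an n×K real matrix with VᵀV = I_K, let D be a K×K real diagonal matrix all of whose diagonal entries are nonzero, and let S be an n×n real diagonal matrix whose diagonal entries all lie in {0,1}. Assume VᵀSV and I_K − VᵀSV are invertible. Consider the polynomial p(y) = det(y²·I_K − y·D·(VᵀSV) − D·(I_K − VᵀSV)·D·(VᵀSV)) in the variable y. Then p is a monic polynomial of degree 2K, its constant term p(0) is nonzero, and every complex root of p is a (nonzero) real number. Equivalently, the determinant equation det(H(x)) = 0, where H(x) = I_K − x·D·(VᵀSV) − x²·D·(I_K − VᵀSV)·D·(VᵀSV), has exactly 2K nonzero real solutions counted with multiplicity (the reciprocals of the roots of p). -/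
open Matrix
open scoped ComplexOrder

/-!
Write `M = VᵀSV` and `N = I - M = Vᵀ(I - S)V`; both are positive semidefinite Gram matrices, and `M`
is positive definite because it is invertible.

* Degree: `det (y²I - yA - B)` is the characteristic polynomial of the block companion matrix
  `[[0, I], [B, A]]` of size `2K`, hence monic of degree `2K`.
* Constant term: `p(0) = ± det (D N D M) ≠ 0`.
* Real roots: if `p(z) = 0` there is a complex `v ≠ 0` with `z²v = z D M v + D N D M v`. Pairing with
  `(Mv)ᴴ` gives `a z² = b z + c` with `a = vᴴMv > 0`, `b = (Mv)ᴴD(Mv)` real and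
  `c = (DMv)ᴴN(DMv) ≥ 0`, a real quadratic with nonnegative discriminant.
-/

/-- The determinant of a monic quadratic matrix polynomial is the characteristic polynomial of its
block companion matrix. -/
lemma det_quadratic_eq_charpoly {R : Type*} [CommRing R] {k : ℕ} (A B : Matrix (Fin k) (Fin k) R) :
    ((Polynomial.X ^ 2 : Polynomial R) • (1 : Matrix (Fin k) (Fin k) (Polynomial R))
        - (Polynomial.X : Polynomial R) • A.map Polynomial.C - B.map Polynomial.C).det
      = (fromBlocks 0 1 B A).charpoly := by
  set x : Polynomial R := Polynomial.X with hx
  set A' := A.map (Polynomial.C : R → Polynomial R)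
  set B' := B.map (Polynomial.C : R → Polynomial R)
  set I : Matrix (Fin k) (Fin k) (Polynomial R) := 1 with hI
  have h1 : (fromBlocks 0 1 B A).charmatrix = fromBlocks (x • I) (-I) (-B') (x • I - A') := by
    ext i j : 2
    rcases i with i | i <;> rcases j with j | j <;>
      simp [charmatrix, I, A', B', Matrix.one_apply, Matrix.diagonal_apply, x]
  -- Column operations of determinant one turn the companion matrix block triangular.
  have h2 : fromBlocks (x • I) (-I) (-B') (x • I - A') * fromBlocks I 0 (x • I) I
      * (fromBlocks I I 0 I * fromBlocks I 0 (-I) I * fromBlocks I I 0 I)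
      = fromBlocks I 0 (A' - x • I) (x ^ 2 • I - x • A' - B') := by
    simp only [fromBlocks_multiply, hI]
    congr 1 <;> simp [pow_two]
    rw [smul_sub, smul_smul]
    abel
  have h3 := congrArg Matrix.det h2
  simp only [det_mul, det_fromBlocks_zero₁₂, det_fromBlocks_zero₂₁] at h3
  simp only [hI, det_one, mul_one, one_mul] at h3
  rw [Matrix.charpoly, h1, ← h3]

/-- A quadratic `a z² = b z + c` with `a > 0`, `b` real and `c ≥ 0` has only real roots. -/
lemma im_eq_zero_of_quadratic {a b c : ℝ} (ha : 0 < a) (hc : 0 ≤ c) {z : ℂ}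
    (h : z ^ 2 * a = z * b + c) : z.im = 0 := by
  have hre := congrArg Complex.re h
  have him := congrArg Complex.im h
  simp [pow_two] at hre him
  by_contra hne
  -- The imaginary part forces `b = 2 a Re z`, and then the real part reads `-a |z|² = c`.
  have hb : b = 2 * a * z.re := by
    apply mul_left_cancel₀ hne; linarith
  subst hb
  have : 0 < a * (z.im * z.im) := mul_pos ha (mul_self_pos.mpr hne)
  have : 0 ≤ a * (z.re * z.re) := mul_nonneg ha.le (mul_self_nonneg _)
  nlinarith

lemma map_ofReal_mul {k l m : ℕ} (A : Matrix (Fin k) (Fin l) ℝ) (B : Matrix (Fin l) (Fin m) ℝ) :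
    (A * B).map Complex.ofReal = A.map Complex.ofReal * B.map Complex.ofReal :=
  Matrix.map_mul (f := Complex.ofRealHom)

/-- A Hermitian form takes real values. -/
lemma exists_real_form {k : ℕ} {A : Matrix (Fin k) (Fin k) ℂ} (hA : A.IsHermitian)
    (x : Fin k → ℂ) : ∃ a : ℝ, (a : ℂ) = star x ⬝ᵥ (A *ᵥ x) :=
  ⟨(star x ⬝ᵥ (A *ᵥ x)).re, Complex.ext rfl (by simpa using
    (hA.im_star_dotProduct_mulVec_self x).symm)⟩

/-- A weighted Gram matrix `Vᵀ diag(t) V` with `t ≥ 0` is positive semidefinite over `ℂ`. -/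
lemma posSemidef_gram {n K : ℕ} (V : Matrix (Fin n) (Fin K) ℝ) (t : Fin n → ℝ)
    (ht : ∀ i, 0 ≤ t i) :
    ((Vᵀ * diagonal t * V).map Complex.ofReal).PosSemidef := by
  have h : (diagonal (fun i => (t i : ℂ))).PosSemidef :=
    PosSemidef.diagonal (fun i => by simpa using ht i)
  have h2 := h.conjTranspose_mul_mul_same (V.map Complex.ofReal)
  convert h2 using 1
  have e1 : (V.map Complex.ofReal)ᴴ = Vᵀ.map Complex.ofReal := by ext i j; simp
  have e2 : diagonal (fun i => (t i : ℂ)) = (diagonal t).map Complex.ofReal := by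
    rw [diagonal_map (by simp)]
  rw [e1, e2]
  rw [map_ofReal_mul, map_ofReal_mul]

theorem det_poly_monic_real_roots (n K : ℕ) (hn : 0 < n) (hK : 0 < K)
    (V : Matrix (Fin n) (Fin K) ℝ) (hV : Vᵀ * V = 1)
    (d : Fin K → ℝ) (hd : ∀ i, d i ≠ 0)
    (D : Matrix (Fin K) (Fin K) ℝ) (hD : D = Matrix.diagonal d)
    (s : Fin n → ℝ) (hs : ∀ i, s i = 0 ∨ s i = 1)
    (S : Matrix (Fin n) (Fin n) ℝ) (hS : S = Matrix.diagonal s)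
    (hinv1 : IsUnit (Vᵀ * S * V))
    (hinv2 : IsUnit ((1 : Matrix (Fin K) (Fin K) ℝ) - Vᵀ * S * V))
    (p : Polynomial ℝ)
    (hp : p = Matrix.det
      ((Polynomial.X ^ 2 : Polynomial ℝ) • (1 : Matrix (Fin K) (Fin K) (Polynomial ℝ))
        - (Polynomial.X : Polynomial ℝ) • (D * (Vᵀ * S * V)).map Polynomial.C
        - (D * (1 - Vᵀ * S * V) * D * (Vᵀ * S * V)).map Polynomial.C)) :
    p.Monic ∧ p.natDegree = 2 * K ∧ p.eval 0 ≠ 0 ∧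
      ∀ z : ℂ, Polynomial.aeval z p = 0 → ∃ r : ℝ, r ≠ 0 ∧ (r : ℂ) = z := by
  have hN : 1 - Vᵀ * S * V = Vᵀ * diagonal (fun i => 1 - s i) * V := by
    have : diagonal (fun i => 1 - s i) = 1 - S := by
      rw [hS, ← diagonal_one, diagonal_sub]
    rw [this, Matrix.mul_sub, Matrix.sub_mul, Matrix.mul_one, hV]
  have hMpsd : ((Vᵀ * S * V).map Complex.ofReal).PosSemidef := by
    rw [hS]
    exact posSemidef_gram V s (fun i => by rcases hs i with h | h <;> simp [h])
  have hNpsd : ((1 - Vᵀ * S * V).map Complex.ofReal).PosSemidef := by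
    rw [hN]
    exact posSemidef_gram V _ (fun i => by rcases hs i with h | h <;> simp [h])
  have hDu : IsUnit D.det := by
    rw [hD, det_diagonal]
    exact (Finset.prod_ne_zero_iff.mpr fun i _ => hd i).isUnit
  have hDherm : (D.map Complex.ofReal).IsHermitian := by
    rw [hD]
    ext i j
    by_cases h : i = j
    · subst h; simp
    · simp [h, Ne.symm h]
  generalize Vᵀ * S * V = M at *
  generalize (1 : Matrix (Fin K) (Fin K) ℝ) - M = N at *
  have hchar := hp.trans (det_quadratic_eq_charpoly (D * M) (D * N * D * M))
  have h0 : p.eval 0 ≠ 0 := by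
    rw [hp, ← Polynomial.coe_evalRingHom, RingHom.map_det]
    have : (Polynomial.evalRingHom (0 : ℝ)).mapMatrix
        ((Polynomial.X ^ 2 : Polynomial ℝ) • (1 : Matrix (Fin K) (Fin K) (Polynomial ℝ))
        - (Polynomial.X : Polynomial ℝ) • (D * M).map Polynomial.C
        - (D * N * D * M).map Polynomial.C) = -(D * N * D * M) := by
      ext i j; simp [-Matrix.map_mul]
    rw [this, det_neg]
    have hM' := (Matrix.isUnit_iff_isUnit_det _).mp hinv1
    have hN' := (Matrix.isUnit_iff_isUnit_det _).mp hinv2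
    simp [det_mul, hM'.ne_zero, hN'.ne_zero, hDu.ne_zero]
  refine ⟨hchar ▸ charpoly_monic _, ?_, h0, ?_⟩
  · rw [hchar, charpoly_natDegree_eq_dim]; simp; ring
  intro z hz
  set M' := M.map Complex.ofReal with hM'
  set N' := N.map Complex.ofReal with hN'
  set D' := D.map Complex.ofReal with hD'
  have hdet : (z ^ 2 • (1 : Matrix (Fin K) (Fin K) ℂ) - z • (D' * M') - D' * N' * D' * M').det
      = 0 := by
    rw [← hz, hp, AlgHom.map_det]
    congr 1
    have e1 : D' * M' = (D * M).map Complex.ofReal := by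
      simp only [D', M', map_ofReal_mul]
    have e2 : D' * N' * D' * M' = (D * N * D * M).map Complex.ofReal := by
      simp only [D', M', N', map_ofReal_mul]
    rw [e1, e2]
    ext i j
    by_cases h : i = j <;> simp [h, mul_comm z, -Matrix.map_mul]
  obtain ⟨v, hv, hv0⟩ := exists_mulVec_eq_zero_iff.mpr hdet
  have hMpd : M'.PosDef := by
    refine hMpsd.posDef_iff_isUnit.mpr ?_
    exact hinv1.map (Complex.ofRealHom.mapMatrix)
  have hMh : M'ᴴ = M' := hMpsd.1
  have hDh : D'ᴴ = D' := hDherm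
  set w := M' *ᵥ v with hw
  obtain ⟨a, ha⟩ : ∃ a : ℝ, (a : ℂ) = star v ⬝ᵥ (M' *ᵥ v) :=
    exists_real_form hMpsd.1 v
  obtain ⟨b, hb⟩ : ∃ b : ℝ, (b : ℂ) = star w ⬝ᵥ (D' *ᵥ w) :=
    exists_real_form hDherm w
  obtain ⟨c, hc⟩ : ∃ c : ℝ, (c : ℂ) = star (D' *ᵥ w) ⬝ᵥ (N' *ᵥ (D' *ᵥ w)) :=
    exists_real_form hNpsd.1 _
  have hapos : 0 < a := by
    have := hMpd.dotProduct_mulVec_pos hv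
    rw [← ha] at this
    exact_mod_cast this
  have hcnn : 0 ≤ c := by
    have := hNpsd.dotProduct_mulVec_nonneg (D' *ᵥ w)
    rw [← hc] at this
    exact_mod_cast this
  have hquad : z ^ 2 * a = z * b + c := by
    have h := congrArg (fun u => star w ⬝ᵥ u) hv0
    have e3 : star w ⬝ᵥ v = star v ⬝ᵥ (M' *ᵥ v) := by
      rw [hw, star_mulVec, hMh, dotProduct_mulVec]
    have e4 : star (D' *ᵥ w) ⬝ᵥ (N' *ᵥ (D' *ᵥ w)) = star w ⬝ᵥ (D' *ᵥ (N' *ᵥ (D' *ᵥ w))) := by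
      rw [star_mulVec, hDh, ← dotProduct_mulVec]
    simp only [sub_mulVec, smul_mulVec, one_mulVec, ← mulVec_mulVec, dotProduct_sub,
      dotProduct_smul, dotProduct_zero, smul_eq_mul, ← hw] at h
    rw [ha, hb, hc, e4, ← e3]
    linear_combination h
  have him := im_eq_zero_of_quadratic hapos hcnn hquad
  have hzr : (z.re : ℂ) = z := Complex.ext rfl (by simp [him])
  refine ⟨z.re, fun hre => h0 ?_, hzr⟩
  rw [← hzr, hre] at hz
  have := Polynomial.aeval_algebraMap_apply ℂ (0 : ℝ) p
  simp only [map_zero, Polynomial.coe_aeval_eq_eval] at this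
  rw [Complex.ofReal_zero, this] at hz
  exact Complex.ofReal_eq_zero.mp hz
end

section
/- Let n, K ≥ 1, let V be an n×K real matrix with VᵀV = I_K, let D be a K×K real diagonal matrix with nonzero diagonal entries, and let S be an n×n real diagonal matrix with diagonal entries in {0,1}. Assume VᵀSV and I_K − VᵀSV are invertible. Set B_E = −S(VDVᵀ)S + (VDVᵀ)S + S(VDVᵀ) and H(x) = I_K − x·D·(VᵀSV) − x²·D·(I_K − VᵀSV)·D·(VᵀSV). Suppose x₀ is a nonzero real number with det(H(x₀)) = 0, and let q₁ ∈ ℝ^K be a nonzero vector with H(x₀)·q₁ = 0. Define q₂ = x₀·D·(VᵀSV)·q₁ and q = S·V·q₁ + (I_n − S)·V·q₂. Then B_E·q = x₀⁻¹·q and q ≠ 0; in particular, q is an eigenvector of B_E corresponding to the eigenvalue x₀⁻¹. -/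
/-!
Write `M = Vᵀ S V`. Since `S` is idempotent and `Vᵀ V = 1`, the vector `q` satisfies `S q = S V q₁`,
hence `Vᵀ S q = M q₁` and `Vᵀ q = M q₁ + (1 - M) q₂`. Substituting into `B_E q`, the contributions
`S V D M q₁` cancel and leave `B_E q = V D M q₁ + S V D (1 - M) q₂`. Multiplying by `x₀` and splitting
`V = (1 - S) V + S V`, the definition of `q₂` gives `x₀ D M q₁ = q₂`, while the kernel equation gives
`q₁ = x₀ D M q₁ + x₀ D (1 - M) q₂`; so `x₀ B_E q = q`. If `q = 0` then `M q₁ = Vᵀ S q = 0`, which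
contradicts the invertibility of `M`.
-/

open Matrix

/-- If `x₀ ≠ 0` satisfies `det(H(x₀)) = 0` and `q₁ ≠ 0` is in the kernel of
`H(x₀)`, then with `q₂ = x₀·D·(VᵀSV)·q₁` and `q = S·V·q₁ + (I − S)·V·q₂`, the vector `q`
is a nonzero eigenvector of `B_E = −S(VDVᵀ)S + (VDVᵀ)S + S(VDVᵀ)` with eigenvalue `x₀⁻¹`. -/
theorem BE_eigenvector_construction (n K : ℕ) (hn : 0 < n) (hK : 0 < K)
    (V : Matrix (Fin n) (Fin K) ℝ) (hV : Vᵀ * V = 1)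
    (d : Fin K → ℝ) (hd : ∀ i, d i ≠ 0)
    (D : Matrix (Fin K) (Fin K) ℝ) (hD : D = Matrix.diagonal d)
    (s : Fin n → ℝ) (hs : ∀ i, s i = 0 ∨ s i = 1)
    (S : Matrix (Fin n) (Fin n) ℝ) (hS : S = Matrix.diagonal s)
    (hinv1 : IsUnit (Vᵀ * S * V))
    (hinv2 : IsUnit ((1 : Matrix (Fin K) (Fin K) ℝ) - Vᵀ * S * V))
    (x₀ : ℝ) (hx₀ : x₀ ≠ 0)
    (hdet : Matrix.det ((1 : Matrix (Fin K) (Fin K) ℝ)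
      - x₀ • (D * (Vᵀ * S * V))
      - (x₀ ^ 2) • (D * (1 - Vᵀ * S * V) * D * (Vᵀ * S * V))) = 0)
    (q₁ : Fin K → ℝ) (hq₁ : q₁ ≠ 0)
    (hker : ((1 : Matrix (Fin K) (Fin K) ℝ)
      - x₀ • (D * (Vᵀ * S * V))
      - (x₀ ^ 2) • (D * (1 - Vᵀ * S * V) * D * (Vᵀ * S * V))).mulVec q₁ = 0)
    (q₂ : Fin K → ℝ) (hq₂ : q₂ = x₀ • (D * (Vᵀ * S * V)).mulVec q₁)
    (q : Fin n → ℝ)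
    (hq : q = (S * V).mulVec q₁ + ((1 - S) * V).mulVec q₂) :
    (-(S * (V * D * Vᵀ) * S) + (V * D * Vᵀ) * S + S * (V * D * Vᵀ)).mulVec q
        = x₀⁻¹ • q
      ∧ q ≠ 0 := by
  have hSS : S * S = S := by
    rw [hS, diagonal_mul_diagonal]
    congr 1
    funext i
    rcases hs i with h | h <;> simp [h]
  have hSq : S *ᵥ q = S *ᵥ (V *ᵥ q₁) := by
    have h0 : S * (1 - S) = 0 := by rw [mul_sub, mul_one, hSS, sub_self]
    rw [hq, mulVec_add, mulVec_mulVec, mulVec_mulVec, ← Matrix.mul_assoc, ← Matrix.mul_assoc,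
      hSS, h0, Matrix.zero_mul, zero_mulVec, add_zero, mulVec_mulVec]
  have hVSq : Vᵀ *ᵥ (S *ᵥ q) = (Vᵀ * S * V) *ᵥ q₁ := by
    rw [hSq, mulVec_mulVec, mulVec_mulVec, Matrix.mul_assoc]
  have hVq : Vᵀ *ᵥ q = (Vᵀ * S * V) *ᵥ q₁ + (1 - Vᵀ * S * V) *ᵥ q₂ := by
    rw [hq, mulVec_add, mulVec_mulVec, mulVec_mulVec, Matrix.sub_mul, Matrix.mul_sub,
      Matrix.one_mul, hV, Matrix.mul_assoc]
  generalize Vᵀ * S * V = M at *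
  have hq1 : q₁ = q₂ + x₀ • D *ᵥ ((1 - M) *ᵥ q₂) := by
    rw [sub_mulVec, sub_mulVec, one_mulVec, smul_mulVec, smul_mulVec, ← hq₂, sub_sub,
      sub_eq_zero] at hker
    rw [hker]
    congr 1
    rw [hq₂, mulVec_smul, mulVec_smul, smul_smul, ← pow_two, mulVec_mulVec, mulVec_mulVec]
    simp only [Matrix.mul_assoc]
  constructor
  · have hB : (-(S * (V * D * Vᵀ) * S) + (V * D * Vᵀ) * S + S * (V * D * Vᵀ)) *ᵥ q
        = V *ᵥ (D *ᵥ (M *ᵥ q₁)) + S *ᵥ (V *ᵥ (D *ᵥ ((1 - M) *ᵥ q₂))) := by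
      simp only [add_mulVec, neg_mulVec, ← mulVec_mulVec]
      rw [hVSq, hVq]
      simp only [mulVec_add]
      abel
    have hDM : D *ᵥ (M *ᵥ q₁) = x₀⁻¹ • q₂ := by
      rw [hq₂, smul_smul, inv_mul_cancel₀ hx₀, one_smul, mulVec_mulVec]
    have hDN : D *ᵥ ((1 - M) *ᵥ q₂) = x₀⁻¹ • (q₁ - q₂) := by
      rw [eq_inv_smul_iff₀ hx₀]
      exact eq_sub_of_add_eq' hq1.symm
    rw [hB, hDM, hDN, hq]
    simp only [mulVec_smul, ← smul_add, ← mulVec_mulVec, sub_mulVec, one_mulVec, mulVec_sub]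
    congr 1
    abel
  · intro h
    rw [h, mulVec_zero, mulVec_zero] at hVSq
    exact hq₁ (mulVec_injective_of_isUnit hinv1 (by rw [← hVSq, mulVec_zero]))
end

section
/- Let n, K ≥ 1, let V be an n×K real matrix with VᵀV = I_K, let D be a K×K real diagonal matrix with nonzero diagonal entries, and let S be an n×n real diagonal matrix with diagonal entries in {0,1}. Assume VᵀSV and I_K − VᵀSV are invertible. Then the matrix B_E = −S(VDVᵀ)S + (VDVᵀ)S + S(VDVᵀ) has rank exactly 2K. -/
open Matrix

/-!
Write `W = (1 - S)V` and `P = [SV  W]`, an `n × 2K` matrix. Since `S` is a symmetric idempotent,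
`B_E = P C Pᵀ` with `C = [[D, D], [D, 0]]`, so `rank B_E ≤ 2K`. Moreover the Gram matrix
`G = PᵀP` is block diagonal with blocks `VᵀSV` and `1 - VᵀSV`, hence invertible, and `C` is
invertible because `D` is. Thus `Pᵀ B_E P = G C G` has rank `2K`, which gives `rank B_E ≥ 2K`.
-/

/-- Under the invertibility assumptions on `VᵀSV` and `I − VᵀSV`, the matrix
`B_E = −S(VDVᵀ)S + (VDVᵀ)S + S(VDVᵀ)` has rank exactly `2K`. -/
theorem BE_rank_eq_two_mul (n K : ℕ) (hn : 0 < n) (hK : 0 < K)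
    (V : Matrix (Fin n) (Fin K) ℝ) (hV : Vᵀ * V = 1)
    (d : Fin K → ℝ) (hd : ∀ i, d i ≠ 0)
    (D : Matrix (Fin K) (Fin K) ℝ) (hD : D = Matrix.diagonal d)
    (s : Fin n → ℝ) (hs : ∀ i, s i = 0 ∨ s i = 1)
    (S : Matrix (Fin n) (Fin n) ℝ) (hS : S = Matrix.diagonal s)
    (hinv1 : IsUnit (Vᵀ * S * V))
    (hinv2 : IsUnit ((1 : Matrix (Fin K) (Fin K) ℝ) - Vᵀ * S * V)) :
    (-(S * (V * D * Vᵀ) * S) + (V * D * Vᵀ) * S + S * (V * D * Vᵀ)).rank = 2 * K := by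
  have hSS : S * S = S := by
    subst hS
    rw [diagonal_mul_diagonal]
    congr 1
    funext i
    rcases hs i with h | h <;> simp [h]
  have hST : Sᵀ = S := by rw [hS, diagonal_transpose]
  have hDi : D * diagonal (fun i => (d i)⁻¹) = 1 := by
    rw [hD, diagonal_mul_diagonal, ← diagonal_one]
    congr 1
    funext i
    exact mul_inv_cancel₀ (hd i)
  set P : Matrix (Fin n) (Fin K ⊕ Fin K) ℝ := fromCols (S * V) (V - S * V) with hP
  set C : Matrix (Fin K ⊕ Fin K) (Fin K ⊕ Fin K) ℝ := fromBlocks D D D 0 with hC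
  have hPT : Pᵀ = fromRows (Vᵀ * S) (Vᵀ - Vᵀ * S) := by
    rw [hP, transpose_fromCols, transpose_sub, transpose_mul, hST]
  have hB : -(S * (V * D * Vᵀ) * S) + (V * D * Vᵀ) * S + S * (V * D * Vᵀ) = P * C * Pᵀ := by
    rw [hPT, hP, hC, fromCols_mul_fromBlocks, fromCols_mul_fromRows]
    simp only [Matrix.mul_zero, add_zero, Matrix.mul_sub, Matrix.sub_mul, Matrix.add_mul,
      Matrix.mul_assoc]
    abel
  have hCunit : IsUnit C := by
    refine IsUnit.of_mul_eq_one (fromBlocks 0 (diagonal fun i => (d i)⁻¹)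
      (diagonal fun i => (d i)⁻¹) (-diagonal fun i => (d i)⁻¹)) ?_
    rw [hC, fromBlocks_multiply]
    simp only [Matrix.mul_neg, hDi, Matrix.mul_zero, Matrix.zero_mul, zero_add, add_zero,
      add_neg_cancel, neg_zero, fromBlocks_one]
  have hSSV : S * (S * V) = S * V := by rw [← Matrix.mul_assoc, hSS]
  have hG : Pᵀ * P = fromBlocks (Vᵀ * S * V) 0 0 (1 - Vᵀ * S * V) := by
    rw [hPT, hP, fromRows_mul_fromCols]
    simp [Matrix.mul_sub, Matrix.sub_mul, Matrix.mul_assoc, hSSV, hV]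
  have hGunit : IsUnit (Pᵀ * P) := by
    rw [isUnit_iff_isUnit_det] at hinv1 hinv2 ⊢
    rw [hG, det_fromBlocks_zero₂₁]
    exact hinv1.mul hinv2
  have hcard : Fintype.card (Fin K ⊕ Fin K) = 2 * K := by simp [two_mul]
  rw [hB]
  apply le_antisymm
  · rw [Matrix.mul_assoc, ← hcard]
    exact (rank_mul_le_left _ _).trans (rank_le_card_width P)
  · rw [← hcard, ← rank_of_isUnit _ ((hGunit.mul hCunit).mul hGunit)]
    have h : Pᵀ * P * C * (Pᵀ * P) = Pᵀ * (P * C * Pᵀ) * P := by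
      simp only [Matrix.mul_assoc]
    rw [h]
    exact (rank_mul_le_left _ _).trans (rank_mul_le_right _ _)
end

section
/- Let n, K ≥ 1, let V be an n×K real matrix with VᵀV = I_K, let D be a K×K real diagonal matrix with nonzero diagonal entries, and let S be an n×n real diagonal matrix with diagonal entries in {0,1}. Assume VᵀSV and I_K − VᵀSV are invertible. Set B_E = −S(VDVᵀ)S + (VDVᵀ)S + S(VDVᵀ) and H(x) = I_K − x·D·(VᵀSV) − x²·D·(I_K − VᵀSV)·D·(VᵀSV). Suppose q₀ ∈ ℝⁿ is a nonzero vector, x₀ is a nonzero real number, and B_E·q₀ = x₀⁻¹·q₀. Define q₁₀ = x₀·D·Vᵀ·q₀ and q₂₀ = x₀·D·Vᵀ·S·q₀. Then: (i) q₀ = S·V·q₁₀ + (I_n − S)·V·q₂₀; (ii) q₂₀ = x₀·D·(VᵀSV)·q₁₀; (iii) q₁₀ ≠ 0 and H(x₀)·q₁₀ = 0; and consequently (iv) det(H(x₀)) = 0. -/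
/-! Since `S² = S`, the matrix `B_E` equals `S(VDVᵀ) + (I − S)(VDVᵀ)S`, so multiplying the
eigenvector equation by `x₀` gives the decomposition of `q₀`. Multiplying that decomposition by
`S` kills its second term, whence `S q₀ = S V q₁₀`, which yields the formula for `q₂₀`.
Multiplying it instead by `x₀ D Vᵀ` and using `VᵀV = I` gives
`q₁₀ = x₀ D (VᵀSV) q₁₀ + x₀ D (I − VᵀSV) q₂₀`; substituting `q₂₀` is the kernel equation
`H(x₀) q₁₀ = 0`. If `q₁₀` vanished, so would `q₂₀` and then `q₀`. -/

open Matrix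

/-- If `q₀ ≠ 0` is an eigenvector of `B_E = −S(VDVᵀ)S + (VDVᵀ)S + S(VDVᵀ)`
corresponding to a nonzero eigenvalue `x₀⁻¹`, then with `q₁₀ = x₀·D·Vᵀ·q₀` and
`q₂₀ = x₀·D·Vᵀ·S·q₀` we have the decomposition `q₀ = S·V·q₁₀ + (I − S)·V·q₂₀`,
`q₂₀ = x₀·D·(VᵀSV)·q₁₀`, `q₁₀` is a nonzero vector in the kernel of `H(x₀)`, and
`det(H(x₀)) = 0`. -/
theorem BE_eigenvector_decomposition (n K : ℕ) (hn : 0 < n) (hK : 0 < K)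
    (V : Matrix (Fin n) (Fin K) ℝ) (hV : Vᵀ * V = 1)
    (d : Fin K → ℝ) (hd : ∀ i, d i ≠ 0)
    (D : Matrix (Fin K) (Fin K) ℝ) (hD : D = Matrix.diagonal d)
    (s : Fin n → ℝ) (hs : ∀ i, s i = 0 ∨ s i = 1)
    (S : Matrix (Fin n) (Fin n) ℝ) (hS : S = Matrix.diagonal s)
    (hinv1 : IsUnit (Vᵀ * S * V))
    (hinv2 : IsUnit ((1 : Matrix (Fin K) (Fin K) ℝ) - Vᵀ * S * V))
    (q₀ : Fin n → ℝ) (hq₀ : q₀ ≠ 0)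
    (x₀ : ℝ) (hx₀ : x₀ ≠ 0)
    (heig : (-(S * (V * D * Vᵀ) * S) + (V * D * Vᵀ) * S + S * (V * D * Vᵀ)).mulVec q₀
      = x₀⁻¹ • q₀)
    (q₁₀ : Fin K → ℝ) (hq₁₀ : q₁₀ = x₀ • (D * Vᵀ).mulVec q₀)
    (q₂₀ : Fin K → ℝ) (hq₂₀ : q₂₀ = x₀ • (D * Vᵀ * S).mulVec q₀) :
    q₀ = (S * V).mulVec q₁₀ + ((1 - S) * V).mulVec q₂₀
      ∧ q₂₀ = x₀ • (D * (Vᵀ * S * V)).mulVec q₁₀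
      ∧ q₁₀ ≠ 0
      ∧ ((1 : Matrix (Fin K) (Fin K) ℝ)
          - x₀ • (D * (Vᵀ * S * V))
          - (x₀ ^ 2) • (D * (1 - Vᵀ * S * V) * D * (Vᵀ * S * V))).mulVec q₁₀ = 0
      ∧ Matrix.det ((1 : Matrix (Fin K) (Fin K) ℝ)
          - x₀ • (D * (Vᵀ * S * V))
          - (x₀ ^ 2) • (D * (1 - Vᵀ * S * V) * D * (Vᵀ * S * V))) = 0 := by
  have hSS : S * S = S := by
    rw [hS, Matrix.diagonal_mul_diagonal]
    congr 1
    funext i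
    rcases hs i with h | h <;> simp [h]
  have h1 : q₀ = (S * V).mulVec q₁₀ + ((1 - S) * V).mulVec q₂₀ := by
    have h : q₀ = x₀ • (x₀⁻¹ • q₀) := by rw [smul_smul, mul_inv_cancel₀ hx₀, one_smul]
    rw [← heig] at h
    rw [hq₁₀, hq₂₀, Matrix.mulVec_smul, Matrix.mulVec_smul, Matrix.mulVec_mulVec,
      Matrix.mulVec_mulVec, ← smul_add, ← Matrix.add_mulVec]
    refine h.trans ?_
    congr 2
    -- `V` is rectangular, so `noncomm_ring` does not apply.
    simp only [Matrix.mul_assoc, Matrix.sub_mul, Matrix.one_mul]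
    abel
  have hSq : S.mulVec q₀ = (S * V).mulVec q₁₀ := by
    have h := congrArg S.mulVec h1
    have h0 : S * ((1 - S) * V) = 0 := by
      rw [← Matrix.mul_assoc, Matrix.mul_sub, hSS, Matrix.mul_one, sub_self, Matrix.zero_mul]
    rwa [Matrix.mulVec_add, Matrix.mulVec_mulVec, Matrix.mulVec_mulVec, h0, Matrix.zero_mulVec,
      add_zero, ← Matrix.mul_assoc, hSS] at h
  have h2 : q₂₀ = x₀ • (D * (Vᵀ * S * V)).mulVec q₁₀ := by
    rw [hq₂₀, ← Matrix.mulVec_mulVec, hSq, Matrix.mulVec_mulVec]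
    simp only [Matrix.mul_assoc]
  have h3 : q₁₀ ≠ 0 := by
    intro h
    rw [h, Matrix.mulVec_zero, smul_zero] at h2
    rw [h, h2, Matrix.mulVec_zero, Matrix.mulVec_zero, add_zero] at h1
    exact hq₀ h1
  have hq : q₁₀ = x₀ • (D * (Vᵀ * S * V)).mulVec q₁₀
      + x₀ • (D * (1 - Vᵀ * S * V)).mulVec q₂₀ := by
    have ha : D * Vᵀ * (S * V) = D * (Vᵀ * S * V) := by simp only [Matrix.mul_assoc]
    have hb : D * Vᵀ * ((1 - S) * V) = D * (1 - Vᵀ * S * V) := by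
      rw [← hV]
      simp only [Matrix.mul_assoc, Matrix.sub_mul, Matrix.mul_sub, Matrix.one_mul]
    calc q₁₀ = x₀ • (D * Vᵀ).mulVec q₀ := hq₁₀
      _ = x₀ • (D * Vᵀ).mulVec ((S * V).mulVec q₁₀ + ((1 - S) * V).mulVec q₂₀) := by rw [← h1]
      _ = _ := by
        rw [Matrix.mulVec_add, Matrix.mulVec_mulVec, Matrix.mulVec_mulVec, ha, hb, smul_add]
  have h4 : ((1 : Matrix (Fin K) (Fin K) ℝ)
      - x₀ • (D * (Vᵀ * S * V))
      - (x₀ ^ 2) • (D * (1 - Vᵀ * S * V) * D * (Vᵀ * S * V))).mulVec q₁₀ = 0 := by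
    rw [h2, Matrix.mulVec_smul, Matrix.mulVec_mulVec, smul_smul, ← pow_two,
      ← Matrix.mul_assoc (D * (1 - Vᵀ * S * V)) D] at hq
    rw [Matrix.sub_mulVec, Matrix.sub_mulVec, Matrix.one_mulVec, Matrix.smul_mulVec,
      Matrix.smul_mulVec, sub_sub]
    exact sub_eq_zero.mpr hq
  exact ⟨h1, h2, h3, h4, Matrix.exists_mulVec_eq_zero_iff.mp ⟨q₁₀, h3, h4⟩⟩
end

section
/- Let n ≥ m ≥ 1 and let W and Q be n×m real matrices with orthonormal columns, i.e., WᵀW = QᵀQ = I_m. Let Qᵀ·W = U₁·Σ·U₂ᵀ be a singular value decomposition, where U₁ and U₂ are m×m real orthogonal matrices and Σ is an m×m diagonal matrix with nonnegative entries, and set O = U₁·U₂ᵀ. Then ‖W − Q·O‖_F ≤ ‖W·Wᵀ − Q·Qᵀ‖_F, where ‖·‖_F denotes the Frobenius norm. -/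
/-!
Put `A = Q U₁` and `B = W U₂`. These frames have orthonormal columns and `Aᵀ B = diag σ`, so
`‖W - Q U₁ U₂ᵀ‖² = ‖B - A‖² = 2 ∑ (1 - σᵢ)`, while
`‖W Wᵀ - Q Qᵀ‖² = ‖B Bᵀ - A Aᵀ‖² = 2 ∑ (1 - σᵢ²)`. Each `σᵢ` is the inner product of the `i`-th
columns of `A` and `B`, both unit vectors, so `σᵢ ≤ 1` (`le_one_of_frames`); with `0 ≤ σᵢ` this
gives `σᵢ² ≤ σᵢ` and the bound.
-/

open Matrix

lemma sum_sq_eq_trace {k l : ℕ} (M : Matrix (Fin k) (Fin l) ℝ) :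
    ∑ i, ∑ j, M i j ^ 2 = (Mᵀ * M).trace := by
  rw [Finset.sum_comm]
  simp [Matrix.trace, Matrix.mul_apply, sq]

lemma le_one_of_frames {n m : ℕ} {A B : Matrix (Fin n) (Fin m) ℝ} {σ : Fin m → ℝ}
    (hA : Aᵀ * A = 1) (hB : Bᵀ * B = 1) (hAB : Aᵀ * B = diagonal σ) (i : Fin m) :
    σ i ≤ 1 := by
  have ha := congrFun (congrFun hA i) i
  have hb := congrFun (congrFun hB i) i
  have hab := congrFun (congrFun hAB i) i
  simp only [mul_apply, transpose_apply, one_apply_eq, diagonal_apply_eq] at ha hb hab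
  have h : 0 ≤ ∑ k, (A k i - B k i) ^ 2 := Finset.sum_nonneg fun k _ => sq_nonneg _
  have e : ∑ k, (A k i - B k i) ^ 2
      = ∑ k, A k i * A k i + ∑ k, B k i * B k i - 2 * ∑ k, A k i * B k i := by
    rw [Finset.mul_sum, ← Finset.sum_add_distrib, ← Finset.sum_sub_distrib]
    exact Finset.sum_congr rfl fun k _ => by ring
  linarith

lemma trace_frame_sub {n m : ℕ} {W P : Matrix (Fin n) (Fin m) ℝ}
    (hW : Wᵀ * W = 1) (hP : Pᵀ * P = 1) :
    ((W - P)ᵀ * (W - P)).trace = 2 * m - 2 * (Pᵀ * W).trace := by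
  have h : (Wᵀ * P).trace = (Pᵀ * W).trace := by
    rw [← trace_transpose, transpose_mul, transpose_transpose]
  simp only [transpose_sub, Matrix.sub_mul, Matrix.mul_sub, hW, hP, trace_sub, h, trace_one,
    Fintype.card_fin]
  ring

lemma trace_proj_sub {n m : ℕ} {W Q : Matrix (Fin n) (Fin m) ℝ}
    (hW : Wᵀ * W = 1) (hQ : Qᵀ * Q = 1) :
    ((W * Wᵀ - Q * Qᵀ)ᵀ * (W * Wᵀ - Q * Qᵀ)).trace
      = 2 * m - 2 * ((Qᵀ * W)ᵀ * (Qᵀ * W)).trace := by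
  have h1 : (W * Wᵀ * (W * Wᵀ)).trace = m := by
    rw [Matrix.mul_assoc, ← Matrix.mul_assoc Wᵀ, hW, Matrix.one_mul, trace_mul_comm, hW]
    simp
  have h2 : (Q * Qᵀ * (Q * Qᵀ)).trace = m := by
    rw [Matrix.mul_assoc, ← Matrix.mul_assoc Qᵀ, hQ, Matrix.one_mul, trace_mul_comm, hQ]
    simp
  have h3 : (W * Wᵀ * (Q * Qᵀ)).trace = ((Qᵀ * W)ᵀ * (Qᵀ * W)).trace := by
    rw [Matrix.mul_assoc, trace_mul_comm]
    simp only [transpose_mul, transpose_transpose, Matrix.mul_assoc]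
  have h4 : (Q * Qᵀ * (W * Wᵀ)).trace = ((Qᵀ * W)ᵀ * (Qᵀ * W)).trace := by
    rw [trace_mul_comm, h3]
  simp only [transpose_sub, transpose_mul W, transpose_mul Q, transpose_transpose,
    Matrix.sub_mul, Matrix.mul_sub, trace_sub, h1, h2, h3, h4]
  ring

/-- Procrustes alignment bound. If `W, Q` are `n×m` matrices with
orthonormal columns, `Qᵀ·W = U₁·Σ·U₂ᵀ` is a singular value decomposition and
`O = U₁·U₂ᵀ`, then `‖W − Q·O‖_F ≤ ‖W·Wᵀ − Q·Qᵀ‖_F` (Frobenius norms). -/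
theorem procrustes_bound (n m : ℕ) (hm : 0 < m) (hmn : m ≤ n)
    (W Q : Matrix (Fin n) (Fin m) ℝ)
    (hW : Wᵀ * W = 1) (hQ : Qᵀ * Q = 1)
    (U₁ U₂ : Matrix (Fin m) (Fin m) ℝ)
    (hU₁ : U₁ᵀ * U₁ = 1) (hU₂ : U₂ᵀ * U₂ = 1)
    (σ : Fin m → ℝ) (hσ : ∀ i, 0 ≤ σ i)
    (hsvd : Qᵀ * W = U₁ * Matrix.diagonal σ * U₂ᵀ) :
    Real.sqrt (∑ i, ∑ j, (W i j - (Q * (U₁ * U₂ᵀ)) i j) ^ 2)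
      ≤ Real.sqrt (∑ i, ∑ j, ((W * Wᵀ) i j - (Q * Qᵀ) i j) ^ 2) := by
  have hU₂' : U₂ * U₂ᵀ = 1 := mul_eq_one_comm.mp hU₂
  have hA : (Q * U₁)ᵀ * (Q * U₁) = 1 := by
    rw [transpose_mul, Matrix.mul_assoc, ← Matrix.mul_assoc Qᵀ, hQ, Matrix.one_mul, hU₁]
  have hB : (W * U₂)ᵀ * (W * U₂) = 1 := by
    rw [transpose_mul, Matrix.mul_assoc, ← Matrix.mul_assoc Wᵀ, hW, Matrix.one_mul, hU₂]
  have hAB : (Q * U₁)ᵀ * (W * U₂) = diagonal σ := by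
    calc (Q * U₁)ᵀ * (W * U₂) = U₁ᵀ * (Qᵀ * W) * U₂ := by
          simp only [transpose_mul, Matrix.mul_assoc]
      _ = (U₁ᵀ * U₁) * diagonal σ * (U₂ᵀ * U₂) := by
          rw [hsvd]; simp only [Matrix.mul_assoc]
      _ = diagonal σ := by rw [hU₁, hU₂, Matrix.one_mul, Matrix.mul_one]
  have hσ1 := le_one_of_frames hA hB hAB
  -- Right multiplication by the orthogonal `U₂` turns the difference of the theorem into `B - A`.
  have hL : ((W - Q * (U₁ * U₂ᵀ))ᵀ * (W - Q * (U₁ * U₂ᵀ))).trace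
      = ((W * U₂ - Q * U₁)ᵀ * (W * U₂ - Q * U₁)).trace := by
    have e : W - Q * (U₁ * U₂ᵀ) = (W * U₂ - Q * U₁) * U₂ᵀ := by
      rw [Matrix.sub_mul, Matrix.mul_assoc W, hU₂', Matrix.mul_one, Matrix.mul_assoc]
    rw [e, transpose_mul, transpose_transpose, Matrix.mul_assoc, trace_mul_comm,
      Matrix.mul_assoc, Matrix.mul_assoc, hU₂, Matrix.mul_one]
  have hWB : W * Wᵀ = (W * U₂) * (W * U₂)ᵀ := by
    rw [transpose_mul, Matrix.mul_assoc, ← Matrix.mul_assoc U₂, hU₂', Matrix.one_mul]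
  have hQA : Q * Qᵀ = (Q * U₁) * (Q * U₁)ᵀ := by
    rw [transpose_mul, Matrix.mul_assoc, ← Matrix.mul_assoc U₁, mul_eq_one_comm.mp hU₁,
      Matrix.one_mul]
  apply Real.sqrt_le_sqrt
  simp only [← Matrix.sub_apply]
  rw [sum_sq_eq_trace, sum_sq_eq_trace, hL, trace_frame_sub hB hA, hWB, hQA,
    trace_proj_sub hB hA, hAB, diagonal_transpose, diagonal_mul_diagonal, trace_diagonal,
    trace_diagonal]
  have : ∑ i, σ i * σ i ≤ ∑ i, σ i :=
    Finset.sum_le_sum fun i _ => mul_le_of_le_one_left (hσ i) (hσ1 i)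
  linarith
end

section
/- Let K ≥ 1, let C be a K×K real matrix of rank K, let f₀ be a permutation of {1,…,K}, and define the K×K real matrix D by D_{ij} = C_{i, f₀(j)} for all i, j ∈ {1,…,K}. Then for every permutation f of {1,…,K}: f = f₀ if and only if C_{f(i) f(j)} = D_{f(i) j} for all i, j ∈ {1,…,K}. -/
open Matrix

/-- If `C` is a `K×K` matrix of rank `K`, `f₀` a permutation of `{1,…,K}`
and `D` the column-permuted matrix `D i j = C i (f₀ j)`, then for every permutation `f`:
`f = f₀` if and only if `C (f i) (f j) = D (f i) j` for all `i, j`. -/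
theorem merge_permutation_unique (K : ℕ) (hK : 0 < K)
    (C : Matrix (Fin K) (Fin K) ℝ) (hC : C.rank = K)
    (f₀ : Equiv.Perm (Fin K))
    (D : Matrix (Fin K) (Fin K) ℝ) (hD : ∀ i j, D i j = C i (f₀ j)) :
    ∀ f : Equiv.Perm (Fin K),
      f = f₀ ↔ ∀ i j, C (f i) (f j) = D (f i) j := by
  have hli : LinearIndependent ℝ C.col := by
    rw [linearIndependent_iff_card_eq_finrank_span, Set.finrank, ← Matrix.rank_eq_finrank_span_cols,
      hC, Fintype.card_fin]
  intro f
  constructor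
  · rintro rfl i j
    exact (hD _ _).symm
  · intro h
    -- Surjectivity of `f` on rows makes columns `f j` and `f₀ j` of `C` equal, and the columns of
    -- a full-rank matrix are pairwise distinct.
    refine Equiv.ext fun j => hli.injective (funext fun a => ?_)
    have := h (f.symm a) j
    rw [hD, f.apply_symm_apply] at this
    exact this
end
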